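/- Let R(x) = y_0''(x) + 6·y_0(x)² - x and 𝓡(x) = ∫_L^x (-R(t)) dt. Then sup_{x ∈ [L_0, L]} |𝓡(x)| ≤ 3.75×10^{-9}. -/

import Mathlib

/-!
The residual `R = y₀'' + 6 y₀² - x` oscillates with amplitude about `4e-9`, and its integral stays
below `1.6e-9` thanks to cancellation (the integral of `|R|` over the interval exceeds the claimed
bound), so `𝓡` has to be enclosed through an approximate antiderivative rather than through `|R|`.

The fourth-order poles of `y₀''` and `6 y₀²` at `x₀` cancel. In the variable `z = 16 τ(x)`, and with
all denominators cleared, `R` is therefore an integer polynomial divided by a constant times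
`(x - x₀)²` (`resNum`, `resDen`, `hasDerivAt_gz`). The range of `z` is cut into 14 intervals
`[n - 1, n + 1]`, and on each of them `10¹⁴ 𝓡` is compared with an explicit integer polynomial `T` in
`s = z - n`. The derivative of the difference is a polynomial in `s` over `resDen * u²`; bounding the
numerator by the sum of the absolute values of its coefficients shows that it is at most `2000`,
and the mean value inequality (`piece`) propagates the error from right to left, starting from
`𝓡(L) = 0`. The polynomials agree at the common end points, so the total error is at most
`4000` per interval, and `|T|` is again bounded by its coefficients (`chk_sound`). The inequalities
between integers that remain are evaluated by the kernel (`chk_pieces`).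
-/

open Set

noncomputable section

/-- The coefficients `c_0, …, c_22` of the polynomial `P_u`. -/
def cP : ℕ → ℝ
  | 0 => 335867/539062
  | 1 => 419712/989125
  | 2 => -352463/3539236
  | 3 => 60789/1703279
  | 4 => -132842/11825541
  | 5 => 43961/54574472
  | 6 => 39599/12036926
  | 7 => -213665/48625258
  | 8 => 61644/14973337
  | 9 => -107283/33444500
  | 10 => 44761/18892011
  | 11 => -28249/13550715
  | 12 => 20641/14839893
  | 13 => 13459/92774551
  | 14 => -4992/34838093
  | 15 => -11771/8149937
  | 16 => 24115/27631671
  | 17 => 42106/39550107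
  | 18 => -21163/32637441
  | 19 => -9782/15918509
  | 20 => 11581/32652169
  | 21 => 14692/88640147
  | 22 => -12278/123249611
  | _ => 0

/-- The polynomial `P_u(t) = Σ_{k=0}^{22} c_k t^k`. -/
def Pu (t : ℝ) : ℝ := ∑ k ∈ Finset.range 23, cP k * t ^ k

def x₀ : ℝ := -770766/323285
def rP1 : ℝ := 7/10
def LP1 : ℝ := 11/2
def L₀ : ℝ := -49/100

/-- `τ(x) = (x - (L + x₀ + r)/2)/((L - x₀ - r)/2)`, mapping `[x₀+r, L]` onto `[-1,1]`. -/
def τP1 (x : ℝ) : ℝ := (x - (LP1 + x₀ + rP1) / 2) / ((LP1 - x₀ - rP1) / 2)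

/-- `y₀(x) = -1/(x-x₀)² + P_u(τ(x))` on `[x₀+r, L]`. -/
def y₀ (x : ℝ) : ℝ := -1 / (x - x₀) ^ 2 + Pu (τP1 x)

/-- The remainder `R(x) = y₀''(x) + 6 y₀(x)² - x`. -/
def RP1 (x : ℝ) : ℝ := deriv (deriv y₀) x + 6 * (y₀ x) ^ 2 - x

/-- `𝓡(x) = ∫_L^x (-R(t)) dt`. -/
def calR (x : ℝ) : ℝ := ∫ t in LP1..x, (-(RP1 t))

/-! ### Integer polynomials as coefficient lists -/

/-- The value at `s` of the polynomial whose coefficients, constant term first, are listed. -/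
def ev : List ℤ → ℝ → ℝ
  | [], _ => 0
  | a :: p, s => a + s * ev p s

/-- Evaluation of a coefficient list at an integer. -/
def evInt : List ℤ → ℤ → ℤ
  | [], _ => 0
  | a :: p, s => a + s * evInt p s

def padd : List ℤ → List ℤ → List ℤ
  | [], q => q
  | a :: p, [] => a :: p
  | a :: p, b :: q => (a + b) :: padd p q

def pscale (k : ℤ) : List ℤ → List ℤ
  | [] => []
  | a :: p => (k * a) :: pscale k p

def pmul : List ℤ → List ℤ → List ℤ
  | [], _ => []
  | a :: p, q => padd (pscale a q) (0 :: pmul p q)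

/-- Formal derivative, by `(a + s q)' = q + s q'`. -/
def pder : List ℤ → List ℤ
  | [] => []
  | _ :: p => padd p (0 :: pder p)

/-- Taylor shift: the coefficients of `s ↦ p (n + s)`. -/
def pshift (n : ℤ) : List ℤ → List ℤ
  | [] => []
  | a :: p => padd (a :: pshift n p) (pscale n (pshift n p))

/-- The sum of the absolute values of the coefficients, a bound for the polynomial on `[-1, 1]`. -/
def norm1 : List ℤ → ℤ
  | [] => 0
  | a :: p => |a| + norm1 p

theorem ev_padd (p q : List ℤ) (s : ℝ) : ev (padd p q) s = ev p s + ev q s := by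
  induction p generalizing q with
  | nil => simp [padd, ev]
  | cons a p ih =>
    cases q with
    | nil => simp [padd, ev]
    | cons b q => simp only [padd, ev, ih]; push_cast; ring

theorem ev_pscale (k : ℤ) (p : List ℤ) (s : ℝ) : ev (pscale k p) s = k * ev p s := by
  induction p with
  | nil => simp [pscale, ev]
  | cons a p ih => simp only [pscale, ev, ih]; push_cast; ring

theorem ev_pmul (p q : List ℤ) (s : ℝ) : ev (pmul p q) s = ev p s * ev q s := by
  induction p with
  | nil => simp [pmul, ev]
  | cons a p ih => simp only [pmul, ev, ev_padd, ev_pscale, ih]; push_cast; ring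

theorem ev_pshift (n : ℤ) (p : List ℤ) (s : ℝ) : ev (pshift n p) s = ev p (n + s) := by
  induction p with
  | nil => simp [pshift, ev]
  | cons a p ih => simp only [pshift, ev, ev_padd, ev_pscale, ih]; ring

theorem hasDerivAt_ev (p : List ℤ) (s : ℝ) : HasDerivAt (ev p) (ev (pder p) s) s := by
  induction p with
  | nil => exact hasDerivAt_const s (0 : ℝ)
  | cons a p ih =>
    have h := ((hasDerivAt_id s).mul ih).const_add (a : ℝ)
    refine h.congr_deriv ?_
    simp only [pder, ev_padd, ev]
    push_cast
    simp

theorem continuous_ev (p : List ℤ) : Continuous (ev p) :=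
  continuous_iff_continuousAt.2 fun s => (hasDerivAt_ev p s).continuousAt

theorem ev_intCast (p : List ℤ) (k : ℤ) : ev p (k : ℝ) = evInt p k := by
  induction p with
  | nil => simp [evInt, ev]
  | cons a p ih => simp only [evInt, ev, ih]; push_cast; ring

theorem abs_ev_le (p : List ℤ) {s : ℝ} (hs : |s| ≤ 1) : |ev p s| ≤ norm1 p := by
  induction p with
  | nil => simp [norm1, ev]
  | cons a p ih =>
    simp only [norm1, ev]
    push_cast
    have h1 : |s * ev p s| ≤ norm1 p := by
      rw [abs_mul]
      exact (mul_le_of_le_one_left (abs_nonneg _) hs).trans ih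
    exact (abs_add_le _ _).trans (by gcongr)

/-! ### The residual as a rational function with integer coefficients -/

/-- A common denominator of `c_0, …, c_22`. -/
def comDen : ℤ :=
  1395938902463003927335380030310238931347424029283306872749796080602140021172325459379597090305574085976682735244769737838013944709674062575201802165363000

/-- The denominator of `P_u (z / 16)` as a polynomial in `z`. -/
def den : ℤ := comDen * 16 ^ 22

/-- The coefficients of `den * P_u (z / 16)`. -/
def pHat : List ℤ :=
  [335867 * (comDen / 539062) * 16 ^ 22,
   419712 * (comDen / 989125) * 16 ^ 21,
   -352463 * (comDen / 3539236) * 16 ^ 20,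
   60789 * (comDen / 1703279) * 16 ^ 19,
   -132842 * (comDen / 11825541) * 16 ^ 18,
   43961 * (comDen / 54574472) * 16 ^ 17,
   39599 * (comDen / 12036926) * 16 ^ 16,
   -213665 * (comDen / 48625258) * 16 ^ 15,
   61644 * (comDen / 14973337) * 16 ^ 14,
   -107283 * (comDen / 33444500) * 16 ^ 13,
   44761 * (comDen / 18892011) * 16 ^ 12,
   -28249 * (comDen / 13550715) * 16 ^ 11,
   20641 * (comDen / 14839893) * 16 ^ 10,
   13459 * (comDen / 92774551) * 16 ^ 9,
   -4992 * (comDen / 34838093) * 16 ^ 8,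
   -11771 * (comDen / 8149937) * 16 ^ 7,
   24115 * (comDen / 27631671) * 16 ^ 6,
   42106 * (comDen / 39550107) * 16 ^ 5,
   -21163 * (comDen / 32637441) * 16 ^ 4,
   -9782 * (comDen / 15918509) * 16 ^ 3,
   11581 * (comDen / 32652169) * 16 ^ 2,
   14692 * (comDen / 88640147) * 16 ^ 1,
   -12278 * (comDen / 123249611) * 16 ^ 0]

/-- The coefficients of `5172560 * (x - x₀)`, where `x = (1161267 z + 9868808) / 5172560`,
equivalently `z = 16 τ(x)`. -/
def uHat : List ℤ := [22201064, 1161267]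

/-- The coefficients of `5172560 * x` for the same substitution. -/
def xHat : List ℤ := [9868808, 1161267]

def uSq : List ℤ := pmul uHat uHat

/-- The constant for which `dx/dz * R = resNum / (resDen * u²)`, where `u = 5172560 (x - x₀)` and
`dx/dz = 1161267 / 5172560`. -/
def resDen : ℤ := den ^ 2 * 1161267 * 5172560 ^ 2

/-- The numerator of `dx/dz * R` over `resDen * u²`, as a polynomial in `z`; the pole terms `-6 / (x - x₀)⁴` of `y₀''`
and `6 / (x - x₀)⁴` of `6 y₀²` have cancelled. -/
def resNum : List ℤ :=
  padd (padd (pscale (5172560 ^ 3 * den) (pmul (pder (pder pHat)) uSq))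
      (pscale (-12 * 5172560 ^ 3 * den * 1161267 ^ 2) pHat))
    (padd (pscale (6 * 1161267 ^ 2 * 5172560) (pmul (pmul pHat pHat) uSq))
      (pscale (-(den ^ 2 * 1161267 ^ 2)) (pmul xHat uSq)))

theorem den_pos : (0 : ℝ) < den := by
  have : (0 : ℤ) < den := by decide +kernel
  exact_mod_cast this

theorem Pu_eq (t : ℝ) : Pu t = ev pHat (16 * t) / den := by
  rw [eq_div_iff den_pos.ne']
  simp only [Pu, Finset.sum_range_succ, Finset.sum_range_zero, cP, pHat, ev, den, comDen]
  norm_num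
  ring

theorem y₀_eq (x : ℝ) :
    y₀ x = -1 / (x - x₀) ^ 2 + ev pHat ((5172560 * x - 9868808) / 1161267) / den := by
  have : 16 * τP1 x = (5172560 * x - 9868808) / 1161267 := by
    simp only [τP1, LP1, x₀, rP1]; norm_num; ring
  rw [y₀, Pu_eq, this]

theorem hasDerivAt_ev_comp (p : List ℤ) (x : ℝ) :
    HasDerivAt (fun x : ℝ => ev p ((5172560 * x - 9868808) / 1161267) / den)
      (5172560 / 1161267 * ev (pder p) ((5172560 * x - 9868808) / 1161267) / den) x := by
  have h1 : HasDerivAt (fun x : ℝ => (5172560 * x - 9868808) / 1161267) (5172560 / 1161267) x := by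
    simpa using (((hasDerivAt_id x).const_mul (5172560 : ℝ)).sub_const 9868808).div_const 1161267
  refine (((hasDerivAt_ev p _).comp x h1).div_const (den : ℝ)).congr_deriv ?_
  ring

theorem hasDerivAt_inv_pow (k : ℕ) (a x : ℝ) (hx : x ≠ x₀) :
    HasDerivAt (fun x : ℝ => a / (x - x₀) ^ k) (-(k * a) / (x - x₀) ^ (k + 1)) x := by
  have hu : x - x₀ ≠ 0 := sub_ne_zero.2 hx
  have h := (((hasDerivAt_id x).sub_const x₀).pow k).inv (pow_ne_zero k hu) |>.const_mul a
  refine (h.congr_deriv ?_).congr_of_eventuallyEq (Filter.Eventually.of_forall fun y => ?_)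
  · rcases k with _ | k
    · simp
    · simp only [id, Pi.pow_apply]
      field_simp
      simp
      ring
  · simp [div_eq_mul_inv]

theorem deriv_y₀ {x : ℝ} (hx : x ≠ x₀) : deriv y₀ x = 2 / (x - x₀) ^ 3 +
    5172560 / 1161267 * ev (pder pHat) ((5172560 * x - 9868808) / 1161267) / den := by
  rw [show y₀ = _ from funext y₀_eq]
  refine ((hasDerivAt_inv_pow 2 (-1) x hx).add (hasDerivAt_ev_comp pHat x)).deriv.trans ?_
  norm_num

theorem deriv_deriv_y₀ {x : ℝ} (hx : x ≠ x₀) : deriv (deriv y₀) x = -6 / (x - x₀) ^ 4 +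
    (5172560 / 1161267) ^ 2 *
      ev (pder (pder pHat)) ((5172560 * x - 9868808) / 1161267) / den := by
  have hE : deriv y₀ =ᶠ[nhds x] fun x => 2 / (x - x₀) ^ 3 + 5172560 / 1161267 *
      (ev (pder pHat) ((5172560 * x - 9868808) / 1161267) / den) := by
    filter_upwards [isOpen_ne.mem_nhds hx] with y hy
    rw [deriv_y₀ hy]; ring
  rw [hE.deriv_eq]
  refine ((hasDerivAt_inv_pow 3 2 x hx).add
    ((hasDerivAt_ev_comp (pder pHat) x).const_mul _)).deriv.trans ?_
  norm_num
  ring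

theorem RP1_eq {x : ℝ} (hx : x ≠ x₀) : RP1 x = (-6 / (x - x₀) ^ 4 +
    (5172560 / 1161267) ^ 2 *
      ev (pder (pder pHat)) ((5172560 * x - 9868808) / 1161267) / den) +
    6 * (-1 / (x - x₀) ^ 2 + ev pHat ((5172560 * x - 9868808) / 1161267) / den) ^ 2 - x := by
  rw [RP1, deriv_deriv_y₀ hx, y₀_eq]

theorem continuousOn_RP1 : ContinuousOn RP1 (Ioi x₀) := by
  have hne : ∀ x ∈ Ioi x₀, x - x₀ ≠ 0 := fun x hx => sub_ne_zero.2 (ne_of_gt hx)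
  refine ContinuousOn.congr ?_ fun x hx => RP1_eq (ne_of_gt hx)
  have hc : ∀ p, Continuous fun x : ℝ => ev p ((5172560 * x - 9868808) / 1161267) := fun p =>
    (continuous_ev p).comp (by fun_prop)
  have h1 := hc pHat
  have h2 := hc (pder (pder pHat))
  refine ContinuousOn.sub (ContinuousOn.add (ContinuousOn.add ?_ ?_) ?_) continuousOn_id
  · exact continuousOn_const.div (by fun_prop) fun x hx => pow_ne_zero _ (hne x hx)
  · exact Continuous.continuousOn (by fun_prop)
  · refine continuousOn_const.mul (ContinuousOn.pow (ContinuousOn.add ?_ ?_) 2)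
    · exact continuousOn_const.div (by fun_prop) fun x hx => pow_ne_zero _ (hne x hx)
    · exact Continuous.continuousOn (by fun_prop)

theorem x₀_lt_LP1 : x₀ < LP1 := by norm_num [x₀, LP1]

theorem hasDerivAt_calR {x : ℝ} (hx : x₀ < x) : HasDerivAt calR (-RP1 x) x := by
  have hc : ContinuousOn (fun t => -RP1 t) (Ioi x₀) := continuousOn_RP1.neg
  refine intervalIntegral.integral_hasDerivAt_right ?_ ?_ ?_
  · refine (hc.mono fun y hy => ?_).intervalIntegrable
    exact lt_of_lt_of_le (lt_min x₀_lt_LP1 hx) hy.1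
  · exact hc.stronglyMeasurableAtFilter isOpen_Ioi x hx
  · exact hc.continuousAt (Ioi_mem_nhds hx)

/-- The remainder `𝓡` in the variable `z = 16 τ(x)`. -/
def gz (z : ℝ) : ℝ := calR ((1161267 * z + 9868808) / 5172560)

theorem hasDerivAt_gz {z : ℝ} (hz : 0 < ev uHat z) :
    HasDerivAt gz (-ev resNum z / (resDen * ev uHat z ^ 2)) z := by
  have hu : ev uHat z = 22201064 + 1161267 * z := by simp [uHat, ev]; ring
  have hX : ev xHat z = 9868808 + 1161267 * z := by simp [xHat, ev]; ring
  have hsub : (1161267 * z + 9868808) / 5172560 - x₀ = ev uHat z / 5172560 := by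
    rw [hu, x₀]; norm_num; ring
  have hx : x₀ < (1161267 * z + 9868808) / 5172560 := by
    rw [← sub_pos, hsub]; positivity
  have h1 : HasDerivAt (fun z : ℝ => (1161267 * z + 9868808) / 5172560) (1161267 / 5172560) z := by
    simpa using (((hasDerivAt_id z).const_mul (1161267 : ℝ)).add_const 9868808).div_const 5172560
  refine ((hasDerivAt_calR hx).comp z h1).congr_deriv ?_
  have hz' : (5172560 * ((1161267 * z + 9868808) / 5172560) - 9868808) / 1161267 = z := by
    field_simp; ring
  have hd := den_pos.ne'
  have hu0 := hz.ne'
  have hxX : (1161267 * z + 9868808) / 5172560 = ev xHat z / 5172560 := by rw [hX]; ring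
  rw [RP1_eq hx.ne', hsub, hz', hxX]
  simp only [resNum, resDen, uSq, ev_padd, ev_pscale, ev_pmul]
  push_cast
  generalize ev uHat z = u at *
  generalize ev pHat z = p
  generalize ev (pder (pder pHat)) z = q
  generalize ev xHat z = X
  generalize (den : ℝ) = D at *
  field_simp
  ring

/-! ### The piecewise polynomial certificate -/

/-- Certificate checker. The polynomials in the list approximate `10¹⁴ gz` on consecutive intervals
`[n - 1, n + 1]`, with `n` going down by two; `v` is the value required at the right end of the first
one and `e` the error accumulated so far. On every piece the derivative error is required to be at
most `2000 * 10⁻¹⁴`. -/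
def chk : List (List ℤ) → ℤ → ℤ → ℤ → Bool
  | [], _, _, _ => true
  | T :: Ts, n, v, e =>
    decide (0 < evInt uHat (n - 1)) &&
    decide (norm1 (padd (pscale (10 ^ 14) (pshift n resNum))
        (pscale resDen (pmul (pshift n uSq) (pder T)))) ≤
      2000 * resDen * evInt uHat (n - 1) ^ 2) &&
    decide (evInt T 1 = v) &&
    decide (norm1 T + (e + 4000) ≤ 375000) &&
    chk Ts (n - 2) (evInt T (-1)) (e + 4000)

theorem resDen_pos : (0 : ℝ) < resDen := by
  have : (0 : ℤ) < resDen := by decide +kernel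
  exact_mod_cast this

theorem ev_uHat_le {a z : ℝ} (h : a ≤ z) : ev uHat a ≤ ev uHat z := by
  simp only [uHat, ev]; push_cast; linarith

/-- On a piece with a checked derivative error, `gz` follows its polynomial approximation up to the
error at the right end point and the derivative error times the length. -/
theorem piece {n e : ℤ} {T : List ℤ} (hu : 0 < evInt uHat (n - 1))
    (hE : norm1 (padd (pscale (10 ^ 14) (pshift n resNum))
        (pscale resDen (pmul (pshift n uSq) (pder T)))) ≤
      2000 * resDen * evInt uHat (n - 1) ^ 2)
    (h1 : |10 ^ 14 * gz (n + 1) - (evInt T 1 : ℝ)| ≤ (e : ℝ)) {s : ℝ} (hs : s ∈ Icc (-1 : ℝ) 1) :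
    |10 ^ 14 * gz (n + s) - ev T s| ≤ (e : ℝ) + 4000 := by
  have hu' : 0 < ev uHat (n - 1) := by
    have := ev_intCast uHat (n - 1)
    push_cast at this
    rw [this]; exact_mod_cast hu
  have hder : ∀ s ∈ Icc (-1 : ℝ) 1, HasDerivWithinAt
      (fun s : ℝ => 10 ^ 14 * gz (n + s) - ev T s)
      (10 ^ 14 * (-ev resNum (n + s) / (resDen * ev uHat (n + s) ^ 2)) - ev (pder T) s)
      (Icc (-1 : ℝ) 1) s := by
    intro s hs
    have hpos : 0 < ev uHat (n + s) := hu'.trans_le (ev_uHat_le (by linarith [hs.1]))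
    have h2 : HasDerivAt (fun s : ℝ => gz (n + s)) _ s := (hasDerivAt_gz hpos).comp_const_add _ _
    exact ((h2.const_mul _).sub (hasDerivAt_ev T s)).hasDerivWithinAt
  have hbd : ∀ s ∈ Icc (-1 : ℝ) 1,
      ‖10 ^ 14 * (-ev resNum (n + s) / (resDen * ev uHat (n + s) ^ 2)) - ev (pder T) s‖
        ≤ 2000 := by
    intro s hs
    have hle : ev uHat (n - 1) ≤ ev uHat (n + s) := ev_uHat_le (by linarith [hs.1])
    have hpos : 0 < ev uHat (n + s) := hu'.trans_le hle
    have hK := resDen_pos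
    have hn := abs_ev_le (padd (pscale (10 ^ 14) (pshift n resNum))
        (pscale resDen (pmul (pshift n uSq) (pder T)))) (abs_le.2 hs)
    have hE' : ((norm1 (padd (pscale (10 ^ 14) (pshift n resNum))
        (pscale resDen (pmul (pshift n uSq) (pder T)))) : ℤ) : ℝ) ≤
        2000 * resDen * ev uHat (n - 1) ^ 2 := by
      have := ev_intCast uHat (n - 1)
      push_cast at this
      rw [this]; exact_mod_cast hE
    have hsq : ev uHat (n - 1) ^ 2 ≤ ev uHat (n + s) ^ 2 := by gcongr
    have hfin := (hn.trans hE').trans (mul_le_mul_of_nonneg_left hsq (by positivity))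
    simp only [ev_padd, ev_pscale, ev_pmul, ev_pshift, uSq] at hfin
    push_cast at hfin
    have hEq : 10 ^ 14 * (-ev resNum (n + s) / (resDen * ev uHat (n + s) ^ 2)) - ev (pder T) s =
        -(10 ^ 14 * ev resNum (n + s) + resDen * (ev uHat (n + s) * ev uHat (n + s) *
          ev (pder T) s)) / (resDen * ev uHat (n + s) ^ 2) := by
      field_simp
      ring
    rw [hEq, Real.norm_eq_abs, abs_div, abs_neg, abs_of_pos (by positivity :
      (0 : ℝ) < resDen * ev uHat (n + s) ^ 2), div_le_iff₀ (by positivity)]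
    norm_num at hfin ⊢
    linarith
  have hmv := (convex_Icc (-1 : ℝ) 1).norm_image_sub_le_of_norm_hasDerivWithin_le hder hbd
    (right_mem_Icc.2 (by norm_num)) hs
  have hT : ev T 1 = evInt T 1 := by simpa using ev_intCast T 1
  simp only [Real.norm_eq_abs, hT] at hmv
  have hlen : |s - 1| ≤ 2 := abs_le.2 ⟨by linarith [hs.1], by linarith [hs.2]⟩
  rw [abs_le] at h1 hmv ⊢
  constructor <;> linarith [hmv.1, hmv.2, h1.1, h1.2]

theorem chk_sound (Ts : List (List ℤ)) (n v e : ℤ) (h : chk Ts n v e = true)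
    (h1 : |10 ^ 14 * gz (n + 1) - (v : ℝ)| ≤ (e : ℝ)) {z : ℝ}
    (hz : z ∈ Ioc (n + 1 - 2 * Ts.length : ℝ) (n + 1)) : |10 ^ 14 * gz z| ≤ 375000 := by
  induction Ts generalizing n v e with
  | nil =>
    simp only [List.length_nil] at hz
    push_cast at hz
    exact absurd hz.1 (by linarith [hz.2])
  | cons T Ts ih =>
    simp only [chk, Bool.and_eq_true, decide_eq_true_eq] at h
    obtain ⟨⟨⟨⟨hu, hE⟩, hv⟩, hN⟩, hrest⟩ := h
    subst hv
    have key := fun s hs => piece (s := s) hu hE h1 hs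
    rcases le_or_gt ((n : ℝ) - 1) z with hz1 | hz1
    · have hs : z - n ∈ Icc (-1 : ℝ) 1 := ⟨by linarith, by linarith [hz.2]⟩
      have hk := key _ hs
      rw [add_sub_cancel] at hk
      have hT := abs_ev_le T (abs_le.2 hs)
      have hN' : (norm1 T : ℝ) + (e + 4000) ≤ 375000 := by exact_mod_cast hN
      rw [abs_le] at hk hT ⊢
      constructor <;> linarith [hk.1, hk.2, hT.1, hT.2]
    · refine ih _ _ _ hrest ?_ ?_
      · have hk := key (-1) (by norm_num)
        have hT : ev T (-1) = evInt T (-1) := by simpa using ev_intCast T (-1)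
        rw [hT] at hk
        push_cast
        rwa [show (n : ℝ) - 2 + 1 = n + -1 by ring]
      · rw [List.length_cons] at hz
        push_cast at hz ⊢
        exact ⟨by linarith [hz.1], by linarith⟩

/-- Approximations of `10¹⁴ gz` on `[n - 1, n + 1]` for `n = 15, 13, …, -11`, obtained by
integrating interpolants of `R` at Chebyshev nodes and rounding the coefficients. -/
def pieces : List (List ℤ) :=
  [[-6742, 13762, 55998, -23980, -74064, -19798, 22854, 20805, 8482, 2203, 423, 57],
   [-1524, 26286, 15181, -23772, -8712, 4595, 2223, -175, -200],
   [32250, -17981, -25460, 4783, 7365, -152, -713, -58],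
   [15391, -7991, 25328, -1047, -5180, -29, 378],
   [79952, -16658, -25302, 3476, 3962, -191, -255],
   [38608, 27834, 13163, -5632, -2885, 466, 176],
   [31182, 2400, -16528, 8389, 1764, -724, -89],
   [-62681, 77950, 2355, -12476, 293, 843, -20],
   [-130727, -28279, 27209, 8490, -2546, -644, 127],
   [-47447, -20486, -18840, -2195, 3380, 286, -202],
   [-30765, -24582, 16314, 2169, -4164, 50, 264],
   [14661, 24724, -42247, 1902, 5843, -524, -347],
   [-132426, 59347, 39165, -8489, -7434, 1216, 538, -109],
   [-139421, 590, -18467, -5975, 13268, -955, -1430, 214, 54]]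

theorem chk_pieces : chk pieces 15 0 0 = true := by decide +kernel

/-- `sup_{x ∈ [L₀,L]} |𝓡(x)| ≤ 3.75 × 10⁻⁹`. -/
theorem statement9 : ∀ x ∈ Icc L₀ LP1, |calR x| ≤ 3.75e-9 := by
  intro x hx
  obtain ⟨hx1, hx2⟩ := hx
  rw [L₀] at hx1
  rw [LP1] at hx2
  -- `z = 16` corresponds to `x = L`, where the integral is empty.
  have h1 : |10 ^ 14 * gz ((15 : ℤ) + 1) - ((0 : ℤ) : ℝ)| ≤ ((0 : ℤ) : ℝ) := by
    have : (1161267 * (((15 : ℤ) : ℝ) + 1) + 9868808) / 5172560 = LP1 := by norm_num [LP1]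
    rw [gz, this, calR, intervalIntegral.integral_same]
    simp
  have h := chk_sound pieces 15 0 0 chk_pieces h1 (z := (5172560 * x - 9868808) / 1161267)
    (by
      have hl : pieces.length = 14 := rfl
      rw [hl]
      push_cast
      constructor
      · rw [lt_div_iff₀ (by norm_num)]; linarith
      · rw [div_le_iff₀ (by norm_num)]; linarith)
  have hxx : (1161267 * ((5172560 * x - 9868808) / 1161267) + 9868808) / 5172560 = x := by
    field_simp; ring
  rw [gz, hxx, abs_mul, abs_of_pos (by norm_num : (0 : ℝ) < 10 ^ 14)] at h
  norm_num at h ⊢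
  linarith

end
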